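/- arXiv:2602.14379 — 6 statements merged into one kernel-verified Lean document; each statement's English description precedes it below -/
import Mathlib

section
/- Let n and d be integers with 1 ≤ d < n. Every vector ψ in the span of the computational basis vectors e_x with wt(x) = d satisfies H_stab ψ = 0, and every vector ψ ∈ ℂ^{2^n} orthogonal to that span satisfies ⟨ψ, H_stab ψ⟩ ≥ ‖ψ‖². In particular, the ground space of H_stab is exactly the span of the weight-d computational basis states and any orthogonal unit vector has energy at least 1. -/
open Matrix Finset

/-- Hamming weight of a bit string. -/
def wt {n : ℕ} (x : Fin n → Fin 2) : ℕ := (Finset.univ.filter fun i => x i = 1).card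

/-- Diagonal projector `Π_S`: the `(x,x)` entry is `1` iff `x i = 1` for all `i ∈ S`. -/
def projOn {n : ℕ} (S : Finset (Fin n)) : Matrix (Fin n → Fin 2) (Fin n → Fin 2) ℂ :=
  Matrix.diagonal fun x => if ∀ i ∈ S, x i = 1 then 1 else 0

/-- `H_{>d} := ∑_{|S| = d+1} Π_S`. -/
noncomputable def Hgt (n d : ℕ) : Matrix (Fin n → Fin 2) (Fin n → Fin 2) ℂ :=
  ∑ S ∈ Finset.powersetCard (d + 1) (Finset.univ : Finset (Fin n)), projOn S

/-- `H_{<d} := ∑_{|S| = d} (I − Π_S)`. -/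
noncomputable def Hlt (n d : ℕ) : Matrix (Fin n → Fin 2) (Fin n → Fin 2) ℂ :=
  ∑ S ∈ Finset.powersetCard d (Finset.univ : Finset (Fin n)), (1 - projOn S)

/-- `H_stab := C(n,d)·H_{>d} + H_{<d} − (C(n,d) − 1)·I`. -/
noncomputable def Hstab (n d : ℕ) : Matrix (Fin n → Fin 2) (Fin n → Fin 2) ℂ :=
  (n.choose d : ℂ) • Hgt n d + Hlt n d - ((n.choose d : ℂ) - 1) • 1

/-- Standard basis vector `e_x` of `ℂ^{2^n}`. -/
noncomputable def e {n : ℕ} (x : Fin n → Fin 2) : (Fin n → Fin 2) → ℂ := Pi.single x 1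

/-- Standard Hermitian inner product on `ℂ^{2^n}`. -/
noncomputable def hinner {n : ℕ} (ψ φ : (Fin n → Fin 2) → ℂ) : ℂ := ∑ x, star (ψ x) * φ x

theorem projOn_sum_aux {n : ℕ} (k : ℕ) (x : Fin n → Fin 2) :
    (∑ S ∈ Finset.powersetCard k (Finset.univ : Finset (Fin n)),
      (if ∀ i ∈ S, x i = 1 then (1 : ℂ) else 0)) = ((wt x).choose k : ℂ) := by
  rw [Finset.sum_boole, wt, ← Finset.card_powersetCard]
  congr 2
  ext S
  simp only [Finset.mem_filter, Finset.mem_powersetCard, Finset.subset_iff, Finset.mem_univ,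
    true_and, implies_true]
  tauto

theorem Hstab_mulVec_aux (n d : ℕ) (ψ : (Fin n → Fin 2) → ℂ) (x : Fin n → Fin 2) :
    (Hstab n d).mulVec ψ x =
      ((n.choose d : ℂ) * ((wt x).choose (d + 1) : ℂ) + 1 - ((wt x).choose d : ℂ)) * ψ x := by
  have h1 : (Hgt n d).mulVec ψ x = ((wt x).choose (d + 1) : ℂ) * ψ x := by
    rw [Hgt, Matrix.sum_mulVec, Finset.sum_apply, ← projOn_sum_aux, Finset.sum_mul]
    exact Finset.sum_congr rfl fun S _ => by rw [projOn, Matrix.mulVec_diagonal]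
  have h2 : (Hlt n d).mulVec ψ x = ((n.choose d : ℂ) - ((wt x).choose d : ℂ)) * ψ x := by
    have h3 : (n.choose d : ℂ) =
        ∑ S ∈ Finset.powersetCard d (Finset.univ : Finset (Fin n)), (1 : ℂ) := by
      simp
    rw [Hlt, Matrix.sum_mulVec, Finset.sum_apply, ← projOn_sum_aux, h3,
      ← Finset.sum_sub_distrib, Finset.sum_mul]
    refine Finset.sum_congr rfl fun S _ => ?_
    rw [projOn, Matrix.sub_mulVec, Matrix.one_mulVec, Pi.sub_apply, Matrix.mulVec_diagonal]
    ring
  rw [Hstab, Matrix.sub_mulVec, Matrix.add_mulVec, Matrix.smul_mulVec, Matrix.smul_mulVec,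
    Matrix.one_mulVec, Pi.sub_apply, Pi.add_apply, Pi.smul_apply, Pi.smul_apply, h1, h2,
    smul_eq_mul, smul_eq_mul]
  ring

theorem stmt0 (n d : ℕ) (hd1 : 1 ≤ d) (hdn : d < n) :
    (∀ ψ : (Fin n → Fin 2) → ℂ,
        ψ ∈ Submodule.span ℂ {v : (Fin n → Fin 2) → ℂ | ∃ x, wt x = d ∧ v = e x} →
        (Hstab n d).mulVec ψ = 0) ∧
    (∀ ψ : (Fin n → Fin 2) → ℂ,
        (∀ φ ∈ Submodule.span ℂ {v : (Fin n → Fin 2) → ℂ | ∃ x, wt x = d ∧ v = e x},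
          hinner φ ψ = 0) →
        (hinner ψ ((Hstab n d).mulVec ψ)).re ≥ ∑ x, ‖ψ x‖ ^ 2) := by
  refine ⟨fun ψ hψ => ?_, fun ψ hψ => ?_⟩
  · induction hψ using Submodule.span_induction with
    | mem v hv =>
      obtain ⟨y, hy, rfl⟩ := hv
      ext x
      rw [Hstab_mulVec_aux]
      by_cases hxy : x = y
      · subst hxy
        simp [hy]
      · simp [e, hxy]
    | zero => exact Matrix.mulVec_zero _
    | add u v _ _ hu hv => rw [Matrix.mulVec_add, hu, hv, add_zero]
    | smul c v _ hv => rw [Matrix.mulVec_smul, hv, smul_zero]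
  · have h0 : ∀ x, wt x = d → ψ x = 0 := by
      intro x hx
      have h := hψ (e x) (Submodule.subset_span ⟨x, hx, rfl⟩)
      simpa [hinner, e, Pi.single_apply, apply_ite] using h
    rw [hinner, Complex.re_sum, ge_iff_le]
    refine Finset.sum_le_sum fun x _ => ?_
    have hre : (star (ψ x) * (Hstab n d).mulVec ψ x).re =
        ((n.choose d : ℝ) * ((wt x).choose (d + 1) : ℝ) + 1 - ((wt x).choose d : ℝ))
          * ‖ψ x‖ ^ 2 := by
      have : star (ψ x) * (Hstab n d).mulVec ψ x =
          ((((n.choose d : ℝ) * ((wt x).choose (d + 1) : ℝ) + 1 - ((wt x).choose d : ℝ))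
          * ‖ψ x‖ ^ 2 : ℝ) : ℂ) := by
        rw [Hstab_mulVec_aux]
        push_cast
        rw [← Complex.conj_mul' (ψ x), starRingEnd_apply]
        ring
      rw [this, Complex.ofReal_re]
    rw [hre]
    by_cases hx : wt x = d
    · simp [h0 x hx]
    have hle : (wt x).choose d ≤ n.choose d * (wt x).choose (d + 1) := by
      rcases Nat.lt_or_gt_of_ne hx with h | h
      · simp [Nat.choose_eq_zero_of_lt h]
      · have hw : wt x ≤ n := by
          simpa [wt] using Finset.card_le_univ (Finset.univ.filter fun i => x i = 1)
        exact (Nat.choose_le_choose d hw).trans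
          (Nat.le_mul_of_pos_right _ (Nat.choose_pos h))
    have hle' : ((wt x).choose d : ℝ) ≤ (n.choose d : ℝ) * ((wt x).choose (d + 1) : ℝ) := by
      exact_mod_cast hle
    nlinarith [sq_nonneg ‖ψ x‖]
end

section
/- Let n, d, T be integers with 1 ≤ d < n and let S_0, S_1, …, S_T be pairwise distinct d-element subsets of Fin n with |S_{t−1} ∩ S_t| = d − 1 for every 1 ≤ t ≤ T. Then for every 1 ≤ t ≤ T and every 0 ≤ t' ≤ T: F_t e_{γ_{t'}} = e_{γ_t} if t' = t − 1, and F_t e_{γ_{t'}} = 0 otherwise. -/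
open Matrix Finset

/-- Indicator string `1_S` of a subset `S ⊆ Fin n`. -/
def clockState {n : ℕ} (S : Finset (Fin n)) : Fin n → Fin 2 := fun i => if i ∈ S then 1 else 0

/-- The forward operator `F_t` determined by the consecutive subsets `Sprev = S_{t-1}` and
`Scur = S_t`: its `(x,y)` entry is the product over positions `i` of the `(x i, y i)` entry of
`|0⟩⟨1|` if `i ∈ Sprev \ Scur`, of `|1⟩⟨0|` if `i ∈ Scur \ Sprev`, of `|1⟩⟨1|` if
`i ∈ Sprev ∩ Scur`, and of the identity otherwise. -/
noncomputable def Fop {n : ℕ} (Sprev Scur : Finset (Fin n)) :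
    Matrix (Fin n → Fin 2) (Fin n → Fin 2) ℂ :=
  Matrix.of fun x y => ∏ i : Fin n,
    if i ∈ Sprev \ Scur then (if x i = 0 ∧ y i = 1 then (1 : ℂ) else 0)
    else if i ∈ Scur \ Sprev then (if x i = 1 ∧ y i = 0 then 1 else 0)
    else if i ∈ Sprev ∩ Scur then (if x i = 1 ∧ y i = 1 then 1 else 0)
    else (if x i = y i then 1 else 0)

theorem stmt5 (n d T : ℕ) (hd1 : 1 ≤ d) (hdn : d < n)
    (S : ℕ → Finset (Fin n))
    (hcard : ∀ t ≤ T, (S t).card = d)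
    (hdist : ∀ t ≤ T, ∀ t' ≤ T, S t = S t' → t = t')
    (hadj : ∀ t, 1 ≤ t → t ≤ T → (S (t - 1) ∩ S t).card = d - 1)
    (t : ℕ) (ht1 : 1 ≤ t) (htT : t ≤ T) (t' : ℕ) (ht' : t' ≤ T) :
    (Fop (S (t - 1)) (S t)).mulVec (e (clockState (S t'))) =
      if t' = t - 1 then e (clockState (S t)) else 0 := by
  have key : ∀ x, ((Fop (S (t - 1)) (S t)).mulVec (e (clockState (S t')))) x
      = Fop (S (t - 1)) (S t) x (clockState (S t')) := by
    intro x
    simp [e]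
  funext x
  rw [key]
  by_cases h : t' = t - 1
  · rw [if_pos h, h]
    by_cases hx : x = clockState (S t)
    · rw [hx]
      simp only [e, Pi.single_eq_same, Fop, Matrix.of_apply]
      apply Finset.prod_eq_one
      intro i _
      by_cases h1 : i ∈ S (t - 1) <;> by_cases h2 : i ∈ S t <;> simp [clockState, h1, h2]
    · rw [e, Pi.single_eq_of_ne hx]
      obtain ⟨i, hi⟩ := Function.ne_iff.mp hx
      simp only [Fop, Matrix.of_apply]
      apply Finset.prod_eq_zero (Finset.mem_univ i)
      by_cases h1 : i ∈ S (t - 1) <;> by_cases h2 : i ∈ S t <;>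
        simp [clockState, h1, h2] at hi ⊢ <;> omega
  · rw [if_neg h]
    have hne : ¬ S (t - 1) ⊆ S t' := by
      intro hsub
      have := Finset.eq_of_subset_of_card_le hsub
        (by rw [hcard t' ht', hcard (t - 1) (by omega)])
      exact h (hdist _ (by omega) _ ht' this).symm
    obtain ⟨i, h1, h3⟩ := Finset.not_subset.mp hne
    simp only [Fop, Matrix.of_apply, Pi.zero_apply]
    apply Finset.prod_eq_zero (Finset.mem_univ i)
    by_cases h2 : i ∈ S t <;> simp [clockState, h1, h2, h3]
end

section
/- Let n, d, T be integers with 1 ≤ d < n and let S_0, S_1, …, S_T be pairwise distinct d-element subsets of Fin n with |S_{t−1} ∩ S_t| = d − 1 for every 1 ≤ t ≤ T. Then for every 1 ≤ t ≤ T and every 0 ≤ t' ≤ T, the conjugate transpose of F_t satisfies: F_t† e_{γ_{t'}} = e_{γ_{t−1}} if t' = t, and F_t† e_{γ_{t'}} = 0 otherwise. -/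
open Matrix Finset

theorem stmt6 (n d T : ℕ) (hd1 : 1 ≤ d) (hdn : d < n)
    (S : ℕ → Finset (Fin n))
    (hcard : ∀ t ≤ T, (S t).card = d)
    (hdist : ∀ t ≤ T, ∀ t' ≤ T, S t = S t' → t = t')
    (hadj : ∀ t, 1 ≤ t → t ≤ T → (S (t - 1) ∩ S t).card = d - 1)
    (t : ℕ) (ht1 : 1 ≤ t) (htT : t ≤ T) (t' : ℕ) (ht' : t' ≤ T) :
    (Fop (S (t - 1)) (S t))ᴴ.mulVec (e (clockState (S t'))) =
      if t' = t then e (clockState (S (t - 1))) else 0 := by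
  funext y
  have hL : (Fop (S (t - 1)) (S t))ᴴ.mulVec (e (clockState (S t'))) y =
      star (Fop (S (t - 1)) (S t) (clockState (S t')) y) := by
    simp [e, Matrix.conjTranspose_apply]
  rw [hL]
  by_cases htt : t' = t
  · subst htt
    rw [if_pos rfl]
    by_cases hy : y = clockState (S (t' - 1))
    · subst hy
      have h1 : Fop (S (t' - 1)) (S t') (clockState (S t')) (clockState (S (t' - 1))) = 1 := by
        unfold Fop
        rw [Matrix.of_apply]
        apply Finset.prod_eq_one
        intro i _
        by_cases h1 : i ∈ S (t' - 1) <;> by_cases h2 : i ∈ S t' <;> simp [clockState, h1, h2]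
      rw [h1]
      simp [e]
    · obtain ⟨i, hi⟩ := Function.ne_iff.mp hy
      have h0 : Fop (S (t' - 1)) (S t') (clockState (S t')) y = 0 := by
        unfold Fop
        rw [Matrix.of_apply]
        apply Finset.prod_eq_zero (Finset.mem_univ i)
        by_cases h1 : i ∈ S (t' - 1) <;> by_cases h2 : i ∈ S t' <;>
          simp [clockState, h1, h2] at hi ⊢ <;> first | exact hi | exact Ne.symm hi
      rw [h0]
      simp [e, hy]
  · rw [if_neg htt]
    have hns : ¬ S t ⊆ S t' := by
      intro hs
      have := Finset.eq_of_subset_of_card_le hs (by rw [hcard t htT, hcard t' ht'])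
      exact htt (hdist t htT t' ht' this).symm
    obtain ⟨i, h2, h3⟩ := Finset.not_subset.mp hns
    have h0 : Fop (S (t - 1)) (S t) (clockState (S t')) y = 0 := by
      unfold Fop
      rw [Matrix.of_apply]
      apply Finset.prod_eq_zero (Finset.mem_univ i)
      by_cases h1 : i ∈ S (t - 1) <;> simp [clockState, h1, h2, h3]
    rw [h0]
    simp
end

section
/- Let a ≥ 1 and B ≥ 1 be integers and set T := B·(a+1) − 1. Define g on {0, 1, …, T} by g(t) := (⌊t/(a+1)⌋, min(m, 2a+1−m)) where m := t mod (2a+2). Then g is a bijection from {0, 1, …, T} onto {0, 1, …, B−1} × {0, 1, …, a}. -/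
/-- The combined clock map: `g t = (t / (a+1), min m (2a+1−m))` where `m = t % (2a+2)`. -/
def g (a : ℕ) (t : ℕ) : ℕ × ℕ :=
  (t / (a + 1), min (t % (2 * a + 2)) (2 * a + 1 - t % (2 * a + 2)))

theorem g_key (a q r : ℕ) (hr : r ≤ a) :
    g a (r + (a + 1) * q) = (q, if q % 2 = 0 then r else a - r) := by
  have h1 : (r + (a + 1) * q) / (a + 1) = q := by
    rw [Nat.add_mul_div_left _ _ (Nat.succ_pos a), Nat.div_eq_of_lt (by omega), zero_add]
  unfold g
  rw [h1]
  rcases Nat.even_or_odd' q with ⟨k, rfl | rfl⟩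
  · have h2 : r + (a + 1) * (2 * k) = r + (2 * a + 2) * k := by ring
    rw [h2, Nat.add_mul_mod_self_left, Nat.mod_eq_of_lt (by omega), if_pos (by omega)]
    congr 1
    omega
  · have h2 : r + (a + 1) * (2 * k + 1) = (r + (a + 1)) + (2 * a + 2) * k := by ring
    rw [h2, Nat.add_mul_mod_self_left, Nat.mod_eq_of_lt (by omega), if_neg (by omega)]
    congr 1
    omega

theorem g_decomp (a t : ℕ) : ∃ q r, r ≤ a ∧ t = r + (a + 1) * q :=
  ⟨t / (a + 1), t % (a + 1), Nat.lt_succ_iff.mp (Nat.mod_lt _ (Nat.succ_pos a)),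
    (Nat.mod_add_div _ _).symm⟩

theorem stmt13 (a B : ℕ) (ha : 1 ≤ a) (hB : 1 ≤ B) :
    Set.BijOn (g a) (Set.Iic (B * (a + 1) - 1)) (Set.Iio B ×ˢ Set.Iic a) := by
  refine ⟨?_, ?_, ?_⟩
  · intro t ht
    obtain ⟨q, r, hr, rfl⟩ := g_decomp a t
    rw [g_key a q r hr]
    simp only [Set.mem_Iic, Set.mem_prod, Set.mem_Iio] at ht ⊢
    refine ⟨?_, by split_ifs <;> omega⟩
    by_contra h
    have h1 : B * (a + 1) ≤ (a + 1) * q := by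
      rw [mul_comm]
      exact Nat.mul_le_mul_left _ (by omega)
    have h2 : 0 < B * (a + 1) := by positivity
    omega
  · intro t _ s _ hts
    obtain ⟨q, r, hr, rfl⟩ := g_decomp a t
    obtain ⟨p, u, hu, rfl⟩ := g_decomp a s
    rw [g_key a q r hr, g_key a p u hu, Prod.mk.injEq] at hts
    obtain ⟨rfl, h⟩ := hts
    split_ifs at h <;> omega
  · rintro ⟨q, y⟩ ⟨hq, hy⟩
    simp only [Set.mem_Iic, Set.mem_Iio] at hq hy
    have hr : (if q % 2 = 0 then y else a - y) ≤ a := by split_ifs <;> omega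
    refine ⟨(if q % 2 = 0 then y else a - y) + (a + 1) * q, ?_, ?_⟩
    · have h1 : (a + 1) * (q + 1) ≤ B * (a + 1) := by
        rw [mul_comm B]
        exact Nat.mul_le_mul_left _ hq
      rw [mul_add, mul_one] at h1
      rw [Set.mem_Iic]
      omega
    · rw [g_key a q _ hr]
      congr 1
      split_ifs <;> omega
end

section
/- Let n ≥ 1. For positions i < j in Fin n, let Π^{01}_{ij} be the diagonal 2^n × 2^n projector whose (x,x) entry is 1 iff x i = 0 and x j = 1, and let H_clock := ∑_{i<j} Π^{01}_{ij}. Then for every string x : Fin n → Fin 2: the diagonal entry (H_clock)_{xx} equals 0 if x is unary, and (H_clock)_{xx} ≥ 1 if x is not unary. -/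
open Matrix Finset

/-- Diagonal projector `Π^{01}_{ij}`: the `(x,x)` entry is `1` iff `x i = 0` and `x j = 1`. -/
noncomputable def proj01 {n : ℕ} (i j : Fin n) :
    Matrix (Fin n → Fin 2) (Fin n → Fin 2) ℂ :=
  Matrix.diagonal fun x => if x i = 0 ∧ x j = 1 then 1 else 0

/-- `H_clock := ∑_{i<j} Π^{01}_{ij}`. -/
noncomputable def Hclock (n : ℕ) : Matrix (Fin n → Fin 2) (Fin n → Fin 2) ℂ :=
  ∑ i : Fin n, ∑ j ∈ Finset.univ.filter (fun j => i < j), proj01 i j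

/-- A string is unary if it is of the form `1^t 0^{n−t}`. -/
def IsUnary {n : ℕ} (x : Fin n → Fin 2) : Prop :=
  ∃ t ≤ n, ∀ i : Fin n, (x i = 1 ↔ (i : ℕ) < t)

lemma Hclock_entry (n : ℕ) (x : Fin n → Fin 2) :
    Hclock n x x = ((∑ i : Fin n, ∑ j ∈ Finset.univ.filter (fun j => i < j),
      (if x i = 0 ∧ x j = 1 then (1 : ℝ) else 0) : ℝ) : ℂ) := by
  unfold Hclock
  simp only [Matrix.sum_apply, proj01, Matrix.diagonal_apply_eq]
  push_cast
  refine Finset.sum_congr rfl fun i _ => Finset.sum_congr rfl fun j _ => ?_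
  split_ifs <;> simp

lemma exists_inversion {n : ℕ} (x : Fin n → Fin 2) (h : ¬ IsUnary x) :
    ∃ i j : Fin n, i < j ∧ x i = 0 ∧ x j = 1 := by
  by_contra hc
  push Not at hc
  apply h
  have h01 : ∀ i, x i ≠ 1 → x i = 0 := fun i hi => by omega
  by_cases hz : ∃ k : ℕ, ∃ hk : k < n, x ⟨k, hk⟩ = 0
  · classical
    obtain ⟨hk, hx⟩ := Nat.find_spec hz
    refine ⟨Nat.find hz, hk.le, fun i => ⟨fun hi => ?_, fun hi => ?_⟩⟩
    · by_contra hlt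
      rcases Nat.lt_or_ge (Nat.find hz) i with h1 | h1
      · exact hc ⟨_, hk⟩ i h1 hx hi
      · have : (⟨_, hk⟩ : Fin n) = i := Fin.ext (by simp only; omega)
        rw [this, hi] at hx
        exact absurd hx (by decide)
    · by_contra hne
      exact Nat.find_min hz hi ⟨i.2, h01 i hne⟩
  · refine ⟨n, le_rfl, fun i => ⟨fun _ => i.2, fun _ => ?_⟩⟩
    by_contra hne
    exact hz ⟨i, i.2, h01 i hne⟩

theorem stmt16 (n : ℕ) (hn : 1 ≤ n) (x : Fin n → Fin 2) :
    (IsUnary x → Hclock n x x = 0) ∧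
    (¬ IsUnary x → ∃ r : ℝ, 1 ≤ r ∧ Hclock n x x = (r : ℂ)) := by
  constructor
  · rintro ⟨t, _, ht⟩
    rw [Hclock_entry, Complex.ofReal_eq_zero]
    refine Finset.sum_eq_zero fun i _ => Finset.sum_eq_zero fun j hj => if_neg ?_
    rintro ⟨hi, hj1⟩
    have hij : (i : ℕ) < j := (Finset.mem_filter.mp hj).2
    have h1 : x i = 1 := (ht i).2 (hij.trans ((ht j).1 hj1))
    rw [hi] at h1
    exact absurd h1 (by decide)
  · intro h
    obtain ⟨i, j, hij, hi, hj⟩ := exists_inversion x h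
    refine ⟨_, ?_, Hclock_entry n x⟩
    have hnn : ∀ a b : Fin n, (0 : ℝ) ≤ if x a = 0 ∧ x b = 1 then (1 : ℝ) else 0 := by
      intro a b; split_ifs <;> norm_num
    calc (1 : ℝ) = if x i = 0 ∧ x j = 1 then (1 : ℝ) else 0 := by simp [hi, hj]
      _ ≤ ∑ b ∈ Finset.univ.filter (fun b => i < b),
            (if x i = 0 ∧ x b = 1 then (1 : ℝ) else 0) :=
          Finset.single_le_sum (f := fun b => if x i = 0 ∧ x b = 1 then (1 : ℝ) else 0)
            (fun b _ => hnn i b) (by simp [hij])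
      _ ≤ _ := Finset.single_le_sum
            (f := fun a => ∑ b ∈ Finset.univ.filter (fun b => a < b),
              (if x a = 0 ∧ x b = 1 then (1 : ℝ) else 0))
            (fun a _ => Finset.sum_nonneg fun b _ => hnn a b) (Finset.mem_univ i)
end

section
/- Let n ≥ 2 and 1 ≤ t ≤ n − 1. Let C_t be the diagonal 2^n × 2^n projector whose (x,x) entry is 1 iff x (t−1) = 1 and x t = 0 (the projector |10⟩⟨10| on positions t−1 and t, identity elsewhere). Then C_t e_{γ^u_t} = e_{γ^u_t}, and for every string y : Fin n → Fin 2 with y ≠ γ^u_t, Π_legal (C_t e_y) = 0. -/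
open Matrix Finset

/-- The unary clock string `γ^u_t = 1^t 0^{n−t}`. -/
def gammaU (n t : ℕ) : Fin n → Fin 2 := fun i => if (i : ℕ) < t then 1 else 0

/-- `Π_legal`: the orthogonal projection onto the span of the unary clock basis states
`{e_{γ^u_t} : 0 ≤ t ≤ n}`, written as the sum of the rank-one projectors
`|γ^u_t⟩⟨γ^u_t|`. -/
noncomputable def PiLegal (n : ℕ) : Matrix (Fin n → Fin 2) (Fin n → Fin 2) ℂ :=
  ∑ t ∈ Finset.range (n + 1), Matrix.vecMulVec (e (gammaU n t)) (star (e (gammaU n t)))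

/-- `C_t`: the diagonal projector `|10⟩⟨10|` on positions `t−1` and `t`, identity
elsewhere; its `(x,x)` entry is `1` iff `x (t−1) = 1` and `x t = 0`. -/
noncomputable def Cop (n t : ℕ) (ht1 : 1 ≤ t) (ht : t < n) :
    Matrix (Fin n → Fin 2) (Fin n → Fin 2) ℂ :=
  Matrix.diagonal fun x => if x ⟨t - 1, by omega⟩ = 1 ∧ x ⟨t, ht⟩ = 0 then 1 else 0

theorem stmt19 (n t : ℕ) (hn : 2 ≤ n) (ht1 : 1 ≤ t) (ht : t ≤ n - 1) :
    (Cop n t ht1 (by omega)).mulVec (e (gammaU n t)) = e (gammaU n t) ∧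
    ∀ y : Fin n → Fin 2, y ≠ gammaU n t →
      (PiLegal n).mulVec ((Cop n t ht1 (by omega)).mulVec (e y)) = 0 := by
  have hC : ∀ y : Fin n → Fin 2, (Cop n t ht1 (by omega)).mulVec (e y) =
      (if y ⟨t - 1, by omega⟩ = 1 ∧ y ⟨t, by omega⟩ = 0 then (1 : ℂ) else 0) • e y := by
    intro y
    funext x
    rw [Cop, Matrix.mulVec_diagonal]
    by_cases hx : x = y
    · subst hx
      simp [e]
    · simp [e, hx]
  refine ⟨?_, ?_⟩
  · rw [hC, if_pos, one_smul]
    refine ⟨?_, ?_⟩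
    · simp only [gammaU]
      rw [if_pos (by omega)]
    · simp [gammaU]
  · intro y hy
    rw [hC]
    split_ifs with h
    · rw [one_smul, PiLegal, Matrix.sum_mulVec]
      refine Finset.sum_eq_zero fun s _ => ?_
      have hne : gammaU n s ≠ y := by
        rintro rfl
        obtain ⟨h1, h2⟩ := h
        simp only [gammaU] at h1 h2
        have h3 : t - 1 < s := by
          by_contra hc
          rw [if_neg hc] at h1
          exact absurd h1 (by decide)
        have h4 : ¬ t < s := by
          intro hc
          rw [if_pos hc] at h2
          exact absurd h2 (by decide)
        have : s = t := by omega
        exact hy (by rw [this])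
      funext x
      simp [e, Matrix.mulVec, Matrix.vecMulVec_apply, dotProduct, Pi.single_apply, hne.symm]
    · rw [zero_smul, Matrix.mulVec_zero]
end
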